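/- Let p ≥ 1, 0 < q < 1, α > 0, A ∈ ℝ^{M×N}, and y ∈ ℝ^M. Then the objective function E(x) = ∑_{i=1}^G ‖x_i‖_p^q + (1/α)·max_{k=1,…,M} |(Ax − y)_k| attains a global minimum on ℝ^N: there exists x* ∈ ℝ^N with E(x*) ≤ E(x) for all x ∈ ℝ^N. -/

import Mathlib

open Finset

/-- The group penalty `∑ᵢ ‖x_i‖_p ^ q` dominates the `q`-th power of the sup norm. -/
lemma norm_rpow_le_sum_group {N G : ℕ} (g : Fin N → Fin G) {p q : ℝ} (hp : 0 < p) (hq : 0 < q)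
    (x : Fin N → ℝ) :
    ‖x‖ ^ q ≤ ∑ i : Fin G, ((∑ j ∈ univ.filter fun j => g j = i, |x j| ^ p) ^ (1 / p)) ^ q := by
  have hsum (i : Fin G) : 0 ≤ ∑ j ∈ univ.filter fun j => g j = i, |x j| ^ p :=
    sum_nonneg fun _ _ => by positivity
  have hterm (i : Fin G) :
      0 ≤ ((∑ j ∈ univ.filter fun j => g j = i, |x j| ^ p) ^ (1 / p)) ^ q :=
    Real.rpow_nonneg (Real.rpow_nonneg (hsum i) _) _
  have htotal := sum_nonneg fun i (_ : i ∈ univ) => hterm i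
  rw [← Real.le_rpow_inv_iff_of_pos (norm_nonneg x) htotal hq,
    pi_norm_le_iff_of_nonneg (Real.rpow_nonneg htotal _)]
  intro k
  rw [Real.le_rpow_inv_iff_of_pos (norm_nonneg _) htotal hq, Real.norm_eq_abs]
  refine le_trans ?_ (single_le_sum (fun i _ => hterm i) (mem_univ (g k)))
  refine Real.rpow_le_rpow (abs_nonneg _) ?_ hq.le
  rw [one_div, Real.le_rpow_inv_iff_of_pos (abs_nonneg _) (hsum _) hp]
  exact single_le_sum (f := fun j => |x j| ^ p) (fun _ _ => by positivity)
    (mem_filter.2 ⟨mem_univ k, rfl⟩)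

/-- The group `ℓ_{p,q}`-`ℓ_∞` objective attains a global minimum on `ℝ^N`.
The fidelity term `max_k |(Ax − y)_k|` is the sup norm `‖A.mulVec x - y‖` on `Fin M → ℝ`. -/
theorem stmt_17 (N M G : ℕ) (g : Fin N → Fin G) (p q α : ℝ)
    (hp : 1 ≤ p) (hq0 : 0 < q) (hq1 : q < 1) (hα : 0 < α)
    (A : Matrix (Fin M) (Fin N) ℝ) (y : Fin M → ℝ) :
    ∃ xstar : Fin N → ℝ, ∀ x : Fin N → ℝ,
      (∑ i : Fin G, ((∑ j ∈ univ.filter fun j => g j = i, |xstar j| ^ p) ^ (1 / p)) ^ q)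
          + (1 / α) * ‖A.mulVec xstar - y‖
        ≤ (∑ i : Fin G, ((∑ j ∈ univ.filter fun j => g j = i, |x j| ^ p) ^ (1 / p)) ^ q)
          + (1 / α) * ‖A.mulVec x - y‖ := by
  have hp0 : 0 < p := zero_lt_one.trans_le hp
  let E : (Fin N → ℝ) → ℝ := fun x =>
    (∑ i : Fin G, ((∑ j ∈ univ.filter fun j => g j = i, |x j| ^ p) ^ (1 / p)) ^ q)
      + (1 / α) * ‖A.mulVec x - y‖
  have hcont : Continuous E := by
    refine Continuous.add (continuous_finsetSum _ fun i _ => ?_)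
      (continuous_const.mul
        ((continuous_const.matrix_mulVec continuous_id).sub continuous_const).norm)
    refine Continuous.rpow_const (Continuous.rpow_const
      (continuous_finsetSum _ fun j _ => ?_) fun _ => Or.inr (by positivity)) fun _ => Or.inr hq0.le
    exact (continuous_apply j).abs.rpow_const fun _ => Or.inr hp0.le
  have hlim : Filter.Tendsto E (Filter.cocompact _) Filter.atTop :=
    Filter.tendsto_atTop_mono
      (fun x => le_add_of_le_of_nonneg (norm_rpow_le_sum_group g hp0 hq0 x) (by positivity))
      ((tendsto_rpow_atTop hq0).comp (tendsto_norm_cocompact_atTop (E := Fin N → ℝ)))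
  exact hcont.exists_forall_le hlim
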